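/- arXiv:1609.09379 — 2 statements merged into one kernel-verified Lean document; each statement's English description precedes it below -/
import Mathlib

section
/- Let L(x) = ∑_{i=0}^{n-1} a_i x^{q^i} be a nonzero linearized polynomial with all coefficients a_i ∈ F_q, let l(x) = ∑_{i=0}^{n-1} a_i x^i ∈ F_q[x] be its conventional q-associate, and let t ≥ 2. Then the map induced by L on F_{q^n} is not identically zero with t-fold composition identically zero (i.e., L is a t-NLP over F_{q^n}) if and only if x^n − 1 divides l(x)^t in F_q[x]. -/
/-!
The map induced by `L` is `l` evaluated at the Frobenius endomorphism `φ` of `F_{q^n}`, so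
composition of linearized maps is multiplication of polynomials. By Dedekind's independence of
characters the minimal polynomial of `φ` over `F_q` is `x ^ n - 1`; hence `L ^ t = 0` iff
`x ^ n - 1` divides `l ^ t`, and `L ≠ 0` because `l` is nonzero of degree less than `n`.
-/

open Polynomial

section LinearizedMap

variable (F R : Type*) [Field F] [Fintype F] [CommRing R] [Algebra F R]

/-- The linearized `q`-associate of a polynomial over `F = F_q`, as an endomorphism of an
`F`-algebra `R`: it sends `∑ aᵢ xⁱ` to the map `z ↦ ∑ aᵢ z ^ (q ^ i)`. Encoding it as evaluation
at the Frobenius makes it an algebra homomorphism, so that products go to compositions. -/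
noncomputable def linearizedMap : F[X] →ₐ[F] Module.End F R :=
  aeval (FiniteField.frobeniusAlgHom F R).toLinearMap

variable {F R}

theorem frobeniusAlgHom_toLinearMap_pow_apply (i : ℕ) (z : R) :
    ((FiniteField.frobeniusAlgHom F R).toLinearMap ^ i) z = z ^ Fintype.card F ^ i := by
  rw [Module.End.coe_pow, AlgHom.coe_toLinearMap, FiniteField.coe_frobeniusAlgHom, pow_iterate]

theorem linearizedMap_sum_C_mul_X_pow_apply (s : Finset ℕ) (a : ℕ → F) (z : R) :
    linearizedMap F R (∑ i ∈ s, C (a i) * X ^ i) z =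
      ∑ i ∈ s, algebraMap F R (a i) * z ^ Fintype.card F ^ i := by
  simp only [linearizedMap, map_sum, map_mul, map_pow, aeval_C, aeval_X, LinearMap.sum_apply,
    Module.End.mul_apply, Module.algebraMap_end_apply, Algebra.smul_def,
    frobeniusAlgHom_toLinearMap_pow_apply]

end LinearizedMap

theorem linearizedMap_eq_zero_iff {F K : Type*} [Field F] [Fintype F] [Field K] [Finite K]
    [Algebra F K] {l : F[X]} :
    linearizedMap F K l = 0 ↔ X ^ Module.finrank F K - 1 ∣ l := by
  rw [← FiniteField.minpoly_frobeniusAlgHom, minpoly.dvd_iff, linearizedMap]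

theorem finrank_eq_of_card_eq_pow {F V : Type*} [Field F] [AddCommGroup V] [Module F V]
    [Fintype F] [Fintype V] {n : ℕ} (h : Fintype.card V = Fintype.card F ^ n) :
    Module.finrank F V = n :=
  Nat.pow_right_injective Fintype.one_lt_card (Module.card_eq_pow_finrank.symm.trans h)

section SumCMulXPow

variable {R : Type*} [Semiring R] {n : ℕ} {a : ℕ → R}

theorem degree_sum_range_C_mul_X_pow_lt :
    degree (∑ i ∈ Finset.range n, C (a i) * X ^ i) < n := by
  rw [Finset.sum_range]
  exact degree_sum_fin_lt fun i : Fin n => a i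

theorem sum_range_C_mul_X_pow_ne_zero (h : ∃ i < n, a i ≠ 0) :
    ∑ i ∈ Finset.range n, C (a i) * X ^ i ≠ 0 := by
  obtain ⟨i, hi, hai⟩ := h
  have hcoeff : (∑ j ∈ Finset.range n, C (a j) * X ^ j).coeff i = a i := by
    simp [finsetSum_coeff, hi]
  intro hzero
  exact hai (by rw [← hcoeff, hzero, coeff_zero])

end SumCMulXPow

theorem not_X_pow_sub_one_dvd_sum_range_C_mul_X_pow {R : Type*} [Ring R] {n : ℕ} {a : ℕ → R}
    (h : ∃ i < n, a i ≠ 0) :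
    ¬ X ^ n - 1 ∣ ∑ i ∈ Finset.range n, C (a i) * X ^ i := by
  have hn : n ≠ 0 := h.elim fun _ hi => Nat.ne_zero_of_lt hi.1
  have : Nontrivial R := h.elim fun _ hi => nontrivial_of_ne _ _ hi.2
  refine (monic_X_pow_sub_C 1 hn).not_dvd_of_degree_lt (sum_range_C_mul_X_pow_ne_zero h) ?_
  rw [degree_X_pow_sub_C (Nat.pos_of_ne_zero hn)]
  exact degree_sum_range_C_mul_X_pow_lt

/-- Let `L = ∑_{i=0}^{n-1} a_i x^{q^i}` be a nonzero linearized polynomial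
with coefficients in `F_q`, `l = ∑_{i=0}^{n-1} a_i x^i` its conventional `q`-associate, and
`t ≥ 2`.  Then `L` is a `t`-NLP over `F_{q^n}` (the induced map `M` is not identically zero
but its `t`-fold composition is identically zero) iff `x^n - 1 ∣ l^t` in `F_q[x]`. -/
theorem stmt_5 {Fq K : Type*} [Field Fq] [Field K] [Algebra Fq K]
    [Fintype Fq] [Fintype K] (q n : ℕ)
    (hq : Fintype.card Fq = q) (hcard : Fintype.card K = q ^ n) (hn : 1 < n)
    (t : ℕ) (ht : 2 ≤ t) (a : ℕ → Fq)
    (hL : ∃ i < n, a i ≠ 0)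
    (M : K → K)
    (hM : ∀ z, M z = ∑ i ∈ Finset.range n, algebraMap Fq K (a i) * z ^ q ^ i) :
    ((∃ z, M z ≠ 0) ∧ ∀ z, M^[t] z = 0) ↔
      (Polynomial.X ^ n - 1 : Polynomial Fq)
        ∣ (∑ i ∈ Finset.range n, Polynomial.C (a i) * Polynomial.X ^ i) ^ t := by
  subst hq
  have hfin : Module.finrank Fq K = n := finrank_eq_of_card_eq_pow hcard
  set l : Fq[X] := ∑ i ∈ Finset.range n, C (a i) * X ^ i
  obtain rfl : M = linearizedMap Fq K l := by
    funext z
    rw [hM, linearizedMap_sum_C_mul_X_pow_apply]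
  have hne : ∃ z, linearizedMap Fq K l z ≠ 0 := by
    refine DFunLike.ne_iff.mp fun hzero : linearizedMap Fq K l = 0 => ?_
    rw [linearizedMap_eq_zero_iff, hfin] at hzero
    exact not_X_pow_sub_one_dvd_sum_range_C_mul_X_pow hL hzero
  calc ((∃ z, linearizedMap Fq K l z ≠ 0) ∧ ∀ z, (linearizedMap Fq K l)^[t] z = 0)
      ↔ ∀ z, (linearizedMap Fq K l)^[t] z = 0 := and_iff_right hne
    _ ↔ linearizedMap Fq K l ^ t = 0 := by
      simp only [LinearMap.ext_iff, Module.End.coe_pow, LinearMap.zero_apply]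
    _ ↔ X ^ n - 1 ∣ l ^ t := by rw [← map_pow, linearizedMap_eq_zero_iff, hfin]
end

section
/- Let p be the characteristic of F_q, let M : F_{q^n} → F_{q^n} be an F_q-linear map that is not the zero map and satisfies M(M(x)) = 0 for all x ∈ F_{q^n}, let γ ∈ F_q be a nonzero element of multiplicative order s, and let f be the permutation f(x) = M(x) + γx of F_{q^n}. Then for a ∈ F_{q^n}, the least positive integer d with f^(d)(a) = a equals: 1 if a = 0; s if a ≠ 0 and M(a) = 0; and p·s if M(a) ≠ 0. Consequently the functional graph of f has one cycle of length 1, (z − 1)/s cycles of length s, and (q^n − z)/(ps) cycles of length ps, where z is the number of roots of M in F_{q^n}. -/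
/-!
Since `M` squares to zero and commutes with scalars, the binomial theorem collapses to
`f^(d)(a) = γ ^ d • a + (d * γ ^ (d - 1)) • M a`. If `M a = 0`, then `a ≠ 0` returns exactly when
`γ ^ d = 1`. If `M a ≠ 0`, applying `M` to `f^(d)(a) = a` first forces `γ ^ d = 1`, and then the
second term forces `d = 0` in `F_q`; as `p` does not divide the order `s` of `γ`, the period is
`p * s`. The sets `ker M \ {0}` and `(ker M)ᶜ` are stable under the permutation `f`, so each is a
disjoint union of cycles of the common length of its points.
-/

open Function

section Card

variable {α : Type*}

theorem natCard_subtype_ne_and {P : α → Prop} {a : α} (ha : P a) :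
    Nat.card {x // x ≠ a ∧ P x} = Nat.card {x // P x} - 1 := by
  have diff_eq : {x | x ≠ a ∧ P x} = {x | P x} \ {a} := by
    ext x
    exact and_comm
  calc Nat.card {x // x ≠ a ∧ P x} = ({x | P x} \ {a} : Set α).ncard := by rw [← diff_eq]; rfl
    _ = Nat.card {x // P x} - 1 := Set.ncard_sdiff_singleton_of_mem ha

theorem natCard_subtype_not [Finite α] (P : α → Prop) :
    Nat.card {x // ¬ P x} = Nat.card α - Nat.card {x // P x} :=
  Set.ncard_compl {x | P x}

end Card

section PeriodicOrbit

variable {α : Type*} {f : α → α}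

theorem mem_periodicOrbit_iff_periodicOrbit_eq {x y : α} (hx : x ∈ periodicPts f)
    (hy : y ∈ periodicPts f) : y ∈ periodicOrbit f x ↔ periodicOrbit f y = periodicOrbit f x := by
  refine ⟨fun h => ?_, fun h => h ▸ self_mem_periodicOrbit hy⟩
  obtain ⟨n, rfl⟩ := (mem_periodicOrbit_iff hx).mp h
  exact periodicOrbit_apply_iterate_eq hx n

theorem card_toFinset_periodicOrbit [DecidableEq α] (f : α → α) (x : α) :
    (periodicOrbit f x).toFinset.card = minimalPeriod f x := by
  have nodup : ((List.range (minimalPeriod f x)).map fun n => f^[n] x).Nodup :=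
    Cycle.nodup_coe_iff.mp nodup_periodicOrbit
  rw [periodicOrbit_def, Cycle.coe_toFinset, List.toFinset_card_of_nodup nodup, List.length_map,
    List.length_range]

theorem card_image_periodicOrbit_mul [DecidableEq α] {s : Finset α} {m : ℕ}
    (hs : ∀ x ∈ s, x ∈ periodicPts f) (hfs : Set.MapsTo f s s)
    (hm : ∀ x ∈ s, minimalPeriod f x = m) :
    (s.image (periodicOrbit f)).card * m = s.card := by
  have fiber_eq (a : α) (ha : a ∈ s) :
      {x ∈ s | periodicOrbit f x = periodicOrbit f a} = (periodicOrbit f a).toFinset := by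
    ext x
    have mem_of_mem_orbit (hx : x ∈ periodicOrbit f a) : x ∈ s := by
      obtain ⟨n, rfl⟩ := (mem_periodicOrbit_iff (hs a ha)).mp hx
      exact hfs.iterate n ha
    have mem_toFinset : x ∈ (periodicOrbit f a).toFinset ↔ x ∈ periodicOrbit f a :=
      Multiset.mem_toFinset
    rw [Finset.mem_filter, mem_toFinset]
    exact ⟨fun h => (mem_periodicOrbit_iff_periodicOrbit_eq (hs a ha) (hs x h.1)).mpr h.2,
      fun h => ⟨mem_of_mem_orbit h, (mem_periodicOrbit_iff_periodicOrbit_eq (hs a ha)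
        (hs x (mem_of_mem_orbit h))).mp h⟩⟩
  rw [Finset.card_eq_sum_card_image (periodicOrbit f) s, Finset.sum_const_nat]
  rw [Finset.forall_mem_image]
  intro a ha
  rw [fiber_eq a ha, card_toFinset_periodicOrbit, hm a ha]

theorem dvd_natCard_of_minimalPeriod_eq [Finite α] (hf : Injective f) {P : α → Prop} {m : ℕ}
    (hP : ∀ x, P x → P (f x)) (hm : ∀ x, P x → minimalPeriod f x = m) :
    m ∣ Nat.card {x // P x} := by
  classical
  have := Fintype.ofFinite α
  rw [Nat.card_eq_fintype_card, Fintype.card_subtype]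
  refine Dvd.intro_left _ (card_image_periodicOrbit_mul (f := f) (fun x _ => hf.mem_periodicPts x)
    ?_ fun x hx => hm x (Finset.mem_filter_univ x |>.mp hx))
  simpa [Set.MapsTo] using hP

end PeriodicOrbit

theorem lcm_char_orderOf {R : Type*} [CommRing R] [IsDomain R] (p : ℕ) [CharP R p] (x : R) :
    p.lcm (orderOf x) = p * orderOf x := by
  rcases CharP.char_is_prime_or_zero R p with hp | rfl
  · rcases (orderOf x).eq_zero_or_pos with hx | hx
    · rw [hx, Nat.lcm_zero_right, mul_zero]
    refine Nat.Coprime.lcm_eq_mul (hp.coprime_iff_not_dvd.mpr ?_)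
    rintro ⟨t, ht⟩
    have := ExpChar.prime (R := R) hp
    have pow_eq_one : x ^ t = 1 := by
      rw [← ExpChar.pow_prime_pow_mul_eq_one_iff p 1 t, pow_one, ← ht, pow_orderOf_eq_one]
    have t_pos : 0 < t := Nat.pos_of_mul_pos_left (ht ▸ hx)
    have order_le : orderOf x ≤ t := orderOf_le_of_pow_eq_one t_pos pow_eq_one
    nlinarith [hp.two_le]
  · rw [Nat.lcm_zero_left, zero_mul]

section SquareZero

variable {R V : Type*} [CommRing R] [AddCommGroup V] [Module R V]

/-- The endomorphism `x ↦ M x + γ • x`, the permutation `f` of the theorem when `M ∘ M = 0` and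
`γ` is a nonzero scalar. -/
def addScalar (M : Module.End R V) (γ : R) : Module.End R V :=
  M + γ • 1

theorem addScalar_apply (M : Module.End R V) (γ : R) (x : V) : addScalar M γ x = M x + γ • x :=
  rfl

variable {M : Module.End R V}

theorem iterate_addScalar (hM : ∀ x, M (M x) = 0) (γ : R) (d : ℕ) (a : V) :
    (addScalar M γ)^[d] a = γ ^ d • a + (d * γ ^ (d - 1)) • M a := by
  induction d with
  | zero => simp
  | succ d ih =>
    have coeff : γ * (d * γ ^ (d - 1)) = d * γ ^ d := by
      cases d with
      | zero => simp
      | succ d => rw [Nat.add_sub_cancel, pow_succ]; ring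
    calc (addScalar M γ)^[d + 1] a = addScalar M γ (γ ^ d • a + (d * γ ^ (d - 1)) • M a) := by
          rw [iterate_succ_apply', ih]
      _ = (γ * γ ^ d) • a + (γ ^ d + γ * (d * γ ^ (d - 1))) • M a := by
          simp only [addScalar_apply, map_add, map_smul, hM]
          module
      _ = γ ^ (d + 1) • a + ((d + 1 : ℕ) * γ ^ (d + 1 - 1)) • M a := by
          rw [coeff, pow_succ', Nat.add_sub_cancel, Nat.cast_succ, add_one_mul, add_comm (γ ^ d)]

theorem iterate_addScalar_of_apply_eq_zero (γ : R) (d : ℕ) {a : V} (hMa : M a = 0) :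
    (addScalar M γ)^[d] a = γ ^ d • a := by
  induction d with
  | zero => simp
  | succ d ih =>
    rw [iterate_succ_apply', ih, addScalar_apply, map_smul, hMa, smul_zero, zero_add, smul_smul,
      pow_succ']

variable [IsDomain R] [Module.IsTorsionFree R V]

theorem pow_smul_eq_self_iff_orderOf_dvd (γ : R) {a : V} (ha : a ≠ 0) (d : ℕ) :
    γ ^ d • a = a ↔ orderOf γ ∣ d := by
  rw [orderOf_dvd_iff_pow_eq_one, (smul_left_injective R ha).eq_iff' (one_smul R a)]

theorem minimalPeriod_addScalar_of_apply_eq_zero (γ : R) {a : V} (ha : a ≠ 0)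
    (hMa : M a = 0) : minimalPeriod (addScalar M γ) a = orderOf γ := by
  refine Nat.dvd_right_iff_eq.mp fun d => ?_
  rw [← isPeriodicPt_iff_minimalPeriod_dvd, IsPeriodicPt, IsFixedPt,
    iterate_addScalar_of_apply_eq_zero γ d hMa, pow_smul_eq_self_iff_orderOf_dvd γ ha]

theorem isPeriodicPt_addScalar_iff (hM : ∀ x, M (M x) = 0) (γ : R) {a : V} (hMa : M a ≠ 0)
    (d : ℕ) : IsPeriodicPt (addScalar M γ) d a ↔ (d : R) = 0 ∧ γ ^ d = 1 := by
  rw [IsPeriodicPt, IsFixedPt, iterate_addScalar hM]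
  constructor
  · intro h
    have pow_eq_one : γ ^ d = 1 := by
      have := congrArg M h
      simp only [map_add, map_smul, hM, smul_zero, add_zero] at this
      rwa [pow_smul_eq_self_iff_orderOf_dvd γ hMa, orderOf_dvd_iff_pow_eq_one] at this
    have coeff_eq_zero : (d : R) * γ ^ (d - 1) = 0 := by
      rwa [pow_eq_one, one_smul, add_eq_left, smul_eq_zero_iff_left hMa] at h
    refine ⟨?_, pow_eq_one⟩
    rcases d.eq_zero_or_pos with rfl | hd
    · exact Nat.cast_zero
    calc (d : R) = d * γ ^ (d - 1) * γ := by
          rw [mul_assoc, pow_sub_one_mul hd.ne', pow_eq_one, mul_one]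
      _ = 0 := by rw [coeff_eq_zero, zero_mul]
  · rintro ⟨cast_eq_zero, pow_eq_one⟩
    rw [cast_eq_zero, pow_eq_one, zero_mul, zero_smul, one_smul, add_zero]

theorem minimalPeriod_addScalar_of_apply_ne_zero (p : ℕ) [CharP R p] (hM : ∀ x, M (M x) = 0)
    (γ : R) {a : V} (hMa : M a ≠ 0) : minimalPeriod (addScalar M γ) a = p * orderOf γ := by
  rw [← lcm_char_orderOf (R := R)]
  refine Nat.dvd_right_iff_eq.mp fun d => ?_
  rw [← isPeriodicPt_iff_minimalPeriod_dvd, isPeriodicPt_addScalar_iff hM γ hMa, Nat.lcm_dvd_iff,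
    CharP.cast_eq_zero_iff R p, orderOf_dvd_iff_pow_eq_one]

theorem apply_addScalar_eq_zero_iff (hM : ∀ x, M (M x) = 0) {γ : R} (hγ : γ ≠ 0) (x : V) :
    M (addScalar M γ x) = 0 ↔ M x = 0 := by
  simp [addScalar_apply, hM, hγ]

theorem injective_addScalar (hM : ∀ x, M (M x) = 0) {γ : R} (hγ : γ ≠ 0) :
    Injective (addScalar M γ) := by
  rw [injective_iff_map_eq_zero]
  intro x hx
  have hMx : M x = 0 := by rw [← apply_addScalar_eq_zero_iff hM hγ, hx, map_zero]
  simpa [addScalar_apply, hMx, hγ] using hx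

end SquareZero

theorem stmt_18_general {R V : Type*} [CommRing R] [IsDomain R] [AddCommGroup V] [Module R V]
    [Module.IsTorsionFree R V] [Finite V] (p : ℕ) [CharP R p] {M : Module.End R V}
    (hM : ∀ x, M (M x) = 0) {γ : R} (hγ : γ ≠ 0) :
    minimalPeriod (addScalar M γ) 0 = 1 ∧
    (∀ a, a ≠ 0 → M a = 0 → minimalPeriod (addScalar M γ) a = orderOf γ) ∧
    (∀ a, M a ≠ 0 → minimalPeriod (addScalar M γ) a = p * orderOf γ) ∧
    Nat.card {x // x ≠ 0 ∧ M x = 0}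
      = ((Nat.card {x // M x = 0} - 1) / orderOf γ) * orderOf γ ∧
    Nat.card {x // M x ≠ 0}
      = ((Nat.card V - Nat.card {x // M x = 0}) / (p * orderOf γ)) * (p * orderOf γ) := by
  have f_injective := injective_addScalar hM hγ
  have period_ker (a : V) := minimalPeriod_addScalar_of_apply_eq_zero (M := M) γ (a := a)
  have period_compl (a : V) := minimalPeriod_addScalar_of_apply_ne_zero p hM γ (a := a)
  refine ⟨minimalPeriod_eq_one_iff_isFixedPt.mpr (map_zero _), period_ker, period_compl, ?_, ?_⟩
  · have dvd := dvd_natCard_of_minimalPeriod_eq f_injective (P := fun x => x ≠ 0 ∧ M x = 0)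
      (fun x hx => ⟨(map_ne_zero_iff _ f_injective).mpr hx.1,
        (apply_addScalar_eq_zero_iff hM hγ x).mpr hx.2⟩) fun x hx => period_ker x hx.1 hx.2
    rw [← natCard_subtype_ne_and (P := fun x => M x = 0) M.map_zero, Nat.div_mul_cancel dvd]
  · have dvd := dvd_natCard_of_minimalPeriod_eq f_injective (P := fun x => M x ≠ 0)
      (fun x => (apply_addScalar_eq_zero_iff hM hγ x).not.mpr) period_compl
    rw [← natCard_subtype_not, Nat.div_mul_cancel dvd]

/-- Let `p = char F_q`, `M` a nonzero `F_q`-linear map of `F_{q^n}` with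
`M (M x) = 0` for all `x`, `γ ∈ F_q*` of multiplicative order `s`, and let `f` be the
permutation `f x = M x + γ x`.  For `a ∈ F_{q^n}`, the least positive `d` with
`f^(d)(a) = a` equals: `1` if `a = 0`; `s` if `a ≠ 0` and `M a = 0`; and `p·s` if
`M a ≠ 0`.  Consequently the functional graph of `f` has one cycle of length `1`,
`(z-1)/s` cycles of length `s` and `(q^n - z)/(ps)` cycles of length `ps`, where `z` is the
number of roots of `M` in `F_{q^n}`:  the `z - 1` points with `a ≠ 0`, `M a = 0` split into
`(z-1)/s` cycles of length `s`, and the `q^n - z` points with `M a ≠ 0` split into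
`(q^n - z)/(ps)` cycles of length `ps`. -/
theorem stmt_18 {Fq K : Type*} [Field Fq] [Field K] [Algebra Fq K]
    [Fintype Fq] [Fintype K] (q n : ℕ)
    (hq : Fintype.card Fq = q) (hcard : Fintype.card K = q ^ n) (hn : 1 < n)
    (p : ℕ) (hp : CharP Fq p)
    (M : Module.End Fq K) (hM0 : M ≠ 0) (hM2 : ∀ x : K, M (M x) = 0)
    (γ : Fq) (hγ : γ ≠ 0)
    (s : ℕ) (hs : 0 < s) (hγs : γ ^ s = 1)
    (hsmin : ∀ j : ℕ, 0 < j → j < s → γ ^ j ≠ 1)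
    (f : K → K) (hf : ∀ x, f x = M x + algebraMap Fq K γ * x) :
    (Function.minimalPeriod f 0 = 1) ∧
    (∀ a : K, a ≠ 0 → M a = 0 → Function.minimalPeriod f a = s) ∧
    (∀ a : K, M a ≠ 0 → Function.minimalPeriod f a = p * s) ∧
    Nat.card {x : K // x ≠ 0 ∧ M x = 0}
      = ((Nat.card {x : K // M x = 0} - 1) / s) * s ∧
    Nat.card {x : K // M x ≠ 0}
      = ((q ^ n - Nat.card {x : K // M x = 0}) / (p * s)) * (p * s) := by
  obtain rfl : s = orderOf γ :=
    ((orderOf_eq_iff hs).mpr ⟨hγs, fun j hj hj0 => hsmin j hj0 hj⟩).symm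
  obtain rfl : f = addScalar M γ :=
    funext fun x => by rw [hf, addScalar_apply, Algebra.smul_def]
  rw [← hcard, ← Nat.card_eq_fintype_card]
  exact stmt_18_general p hM2 hγ
end
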